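/- Let μ and ν be Borel probability measures on [0,1]^r. Let I = ∏_{i=1}^r [a_i, b_i] ⊆ [0,1]^r with a_i < b_i for all i, and let ι : [0,1]^r → I be the canonical affine bijection w ↦ (a_i + w_i(b_i − a_i))_i. Suppose the restriction of μ to I equals μ(I) times the uniform probability measure on I (normalized Lebesgue measure on I). Define the nested measure nest(ν, μ, I) = μ|_{[0,1]^r ∖ I} + μ(I)·ι_*ν. Let J ⊆ {1,…,r} with |J| = k and suppose the pushforward of ν under the coordinate projection π_J : u ↦ (u_i)_{i∈J} is Lebesgue measure on [0,1]^J. Then (π_J)_* nest(ν, μ, I) = (π_J)_* μ. In particular, if μ and ν are copulas of order k, then so is nest(ν, μ, I). -/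

import Mathlib

open MeasureTheory Filter
open scoped ENNReal BigOperators

noncomputable section

/-- The unit cube `[0,1]^r`. -/
def cube (r : ℕ) : Set (Fin r → ℝ) := Set.univ.pi fun _ => Set.Icc (0:ℝ) 1

/-- A Borel probability measure on `[0,1]^r` is a copula of order `k` if its pushforward
under the coordinate projection to any `k`-element set `J` of coordinates is the Lebesgue
measure on `[0,1]^J`. -/
def IsCopulaOfOrder (r k : ℕ) (c : Measure (Fin r → ℝ)) : Prop :=
  IsProbabilityMeasure c ∧ c (cube r) = 1 ∧
    ∀ J : Finset (Fin r), J.card = k →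
      c.map (fun v (i : J) => v i.1) =
        Measure.pi fun _ : J => volume.restrict (Set.Icc (0:ℝ) 1)

/-- `liminf_{s→0+} c_J(s) / s^τ` (in `ℝ≥0∞`), where
`c_J(s) = c {u ∈ [0,1]^r : u_i ≤ s ∀ i ∈ J}`. -/
def tailLiminf (r : ℕ) (c : Measure (Fin r → ℝ)) (J : Finset (Fin r)) (τ : ℝ) : ℝ≥0∞ :=
  Filter.liminf (fun s : ℝ => c ({v | ∀ i ∈ J, v i ≤ s} ∩ cube r) / ENNReal.ofReal (s ^ τ))
    (nhdsWithin 0 (Set.Ioi 0))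

/-- The tail degree `td_J(c)`: the infimum of the exponents `τ ≥ 0` with
`liminf_{s→0+} c_J(s)/s^τ = ∞` (equal to `∞` if there is no such exponent). -/
def tailDeg (r : ℕ) (c : Measure (Fin r → ℝ)) (J : Finset (Fin r)) : ℝ≥0∞ :=
  sInf {τ : ℝ≥0∞ | tailLiminf r c J τ.toReal = ⊤}

/-- The tail coefficient `tc_J(c) = liminf_{s→0+} c_J(s)/s^{td_J(c)}`. -/
def tailCoef (r : ℕ) (c : Measure (Fin r → ℝ)) (J : Finset (Fin r)) : ℝ≥0∞ :=
  tailLiminf r c J (tailDeg r c J).toReal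

/-- The box `I = ∏_i [a_i, b_i]`. -/
def boxI (r : ℕ) (a b : Fin r → ℝ) : Set (Fin r → ℝ) :=
  Set.univ.pi fun i => Set.Icc (a i) (b i)

/-- The canonical affine map `ι : [0,1]^r → I`, `w ↦ (a_i + w_i (b_i − a_i))_i`. -/
def iota (r : ℕ) (a b : Fin r → ℝ) : (Fin r → ℝ) → (Fin r → ℝ) :=
  fun w i => a i + w i * (b i - a i)

/-- The nested measure `nest(ν, μ, I) = μ|_{[0,1]^r ∖ I} + μ(I)·ι_*ν`. -/
def nestM (r : ℕ) (ν μ : Measure (Fin r → ℝ)) (a b : Fin r → ℝ) : Measure (Fin r → ℝ) :=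
  μ.restrict (cube r \ boxI r a b) + (μ (boxI r a b)) • ν.map (iota r a b)

/-! The restriction `μ|_I` is `μ(I) · ι_*λ`, with `λ` the uniform measure on the unit cube, so
nesting only replaces `λ` by `ν` there. As `π_J ∘ ι` factors through `π_J`, and `ν` and `λ` have the
same image under `π_J`, the images of `ι_*ν` and `ι_*λ` under `π_J` also agree. -/

lemma cube_eq_Icc (r : ℕ) : cube r = Set.Icc 0 1 := Set.pi_univ_Icc 0 1

lemma boxI_eq_Icc (r : ℕ) (a b : Fin r → ℝ) : boxI r a b = Set.Icc a b := Set.pi_univ_Icc a b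

lemma measurableSet_cube (r : ℕ) : MeasurableSet (cube r) :=
  cube_eq_Icc r ▸ measurableSet_Icc

lemma measurableSet_boxI (r : ℕ) (a b : Fin r → ℝ) : MeasurableSet (boxI r a b) :=
  boxI_eq_Icc r a b ▸ measurableSet_Icc

@[fun_prop]
lemma measurable_iota (r : ℕ) (a b : Fin r → ℝ) : Measurable (iota r a b) := by
  unfold iota
  fun_prop

lemma smul_map_affine_volume_pi {ι : Type*} [Fintype ι] (a : ι → ℝ) {d : ι → ℝ}
    (hd : ∀ i, d i ≠ 0) :
    ENNReal.ofReal |∏ i, d i| • (volume : Measure (ι → ℝ)).map (fun w i => a i + w i * d i) =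
      volume := by
  classical
  have hdet : (Matrix.diagonal d).det = ∏ i, d i := Matrix.det_diagonal
  have hcomp : (fun w i => a i + w i * d i) =
      (a + ·) ∘ Matrix.toLin' (Matrix.diagonal d) := by
    ext w i
    simp [Matrix.mulVec_diagonal, mul_comm]
  have hscale := Real.smul_map_diagonal_volume_pi (D := d)
    (hdet ▸ Finset.prod_ne_zero_iff.2 fun i _ => hd i)
  rw [hcomp, ← Measure.map_map (by fun_prop) (by fun_prop), ← Measure.map_smul, ← hdet, hscale,
    map_add_left_eq_self]

section Box

variable {r : ℕ} {a b : Fin r → ℝ}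

lemma iota_preimage_boxI (hab : ∀ i, a i < b i) : iota r a b ⁻¹' boxI r a b = cube r := by
  ext w
  simp only [boxI, cube, iota, Set.mem_preimage, Set.mem_univ_pi, Set.mem_Icc]
  refine forall_congr' fun i => ?_
  have hpos : 0 < b i - a i := sub_pos.2 (hab i)
  refine and_congr ?_ ?_
  · rw [le_add_iff_nonneg_right, mul_nonneg_iff_of_pos_right hpos]
  · rw [← le_sub_iff_add_le', mul_le_iff_le_one_left hpos]

lemma volume_boxI (a b : Fin r → ℝ) :
    volume (boxI r a b) = ∏ i, ENNReal.ofReal (b i - a i) := by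
  rw [boxI_eq_Icc, Real.volume_Icc_pi]

lemma volume_boxI_ne_zero (hab : ∀ i, a i < b i) : volume (boxI r a b) ≠ 0 := by
  rw [volume_boxI, Finset.prod_ne_zero_iff]
  exact fun i _ => (ENNReal.ofReal_pos.2 (sub_pos.2 (hab i))).ne'

lemma volume_boxI_ne_top (a b : Fin r → ℝ) : volume (boxI r a b) ≠ ⊤ := by
  rw [boxI_eq_Icc]
  exact measure_Icc_lt_top.ne

lemma volume_restrict_boxI (hab : ∀ i, a i < b i) :
    volume.restrict (boxI r a b) =
      volume (boxI r a b) • (volume.restrict (cube r)).map (iota r a b) := by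
  have hvol : ENNReal.ofReal |∏ i, (b i - a i)| = volume (boxI r a b) := by
    rw [volume_boxI, Finset.abs_prod, ENNReal.ofReal_prod_of_nonneg fun i _ => abs_nonneg _]
    exact Finset.prod_congr rfl fun i _ => by rw [abs_of_pos (sub_pos.2 (hab i))]
  have hscale : volume (boxI r a b) • volume.map (iota r a b) = volume :=
    hvol ▸ smul_map_affine_volume_pi a fun i => (sub_pos.2 (hab i)).ne'
  calc volume.restrict (boxI r a b)
      = (volume (boxI r a b) • volume.map (iota r a b)).restrict (boxI r a b) := by rw [hscale]
    _ = volume (boxI r a b) • (volume.restrict (cube r)).map (iota r a b) := by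
      rw [Measure.restrict_smul,
        Measure.restrict_map (measurable_iota r a b) (measurableSet_boxI r a b),
        iota_preimage_boxI hab]

lemma restrict_boxI_eq_smul_map_iota {μ : Measure (Fin r → ℝ)} (hab : ∀ i, a i < b i)
    (hunif : μ.restrict (boxI r a b) =
      (μ (boxI r a b) / volume (boxI r a b)) • volume.restrict (boxI r a b)) :
    μ.restrict (boxI r a b) =
      μ (boxI r a b) • (volume.restrict (cube r)).map (iota r a b) := by
  rw [hunif, volume_restrict_boxI hab, smul_smul,
    ENNReal.div_mul_cancel (volume_boxI_ne_zero hab) (volume_boxI_ne_top a b)]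

lemma restrict_cube_diff_add_restrict_boxI {μ : Measure (Fin r → ℝ)}
    (hμ : ∀ᵐ v ∂μ, v ∈ cube r) (hI : boxI r a b ⊆ cube r) :
    μ.restrict (cube r \ boxI r a b) + μ.restrict (boxI r a b) = μ := by
  rw [← Measure.restrict_union Set.disjoint_sdiff_left (measurableSet_boxI r a b),
    Set.sdiff_union_of_subset hI, Measure.restrict_eq_self_of_ae_mem hμ]

end Box

section Projection

variable {r : ℕ}

lemma map_restrict_volume_cube (J : Finset (Fin r)) :
    (volume.restrict (cube r)).map J.restrict =
      Measure.pi fun _ : J => volume.restrict (Set.Icc (0 : ℝ) 1) := by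
  have : IsProbabilityMeasure (volume.restrict (Set.Icc (0 : ℝ) 1)) := ⟨by simp⟩
  rw [cube, volume_pi, Measure.restrict_pi_pi, ← Measure.infinitePi_eq_pi,
    Measure.infinitePi_map_restrict]

lemma map_restrict_map_iota_congr (a b : Fin r → ℝ) {J : Finset (Fin r)}
    {ν ν' : Measure (Fin r → ℝ)} (h : ν.map J.restrict = ν'.map J.restrict) :
    (ν.map (iota r a b)).map J.restrict = (ν'.map (iota r a b)).map J.restrict := by
  let iotaJ : (J → ℝ) → J → ℝ := fun w i => a i + w i * (b i - a i)
  have hiotaJ : Measurable iotaJ := by fun_prop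
  have hπ : Measurable (J.restrict (π := fun _ => ℝ)) := J.measurable_restrict
  have hfactor (ρ : Measure (Fin r → ℝ)) :
      (ρ.map (iota r a b)).map J.restrict = (ρ.map J.restrict).map iotaJ :=
    (Measure.map_map hπ (measurable_iota r a b)).trans (Measure.map_map hiotaJ hπ).symm
  rw [hfactor, hfactor, h]

end Projection

section Nest

variable {r : ℕ} {a b : Fin r → ℝ} {μ ν : Measure (Fin r → ℝ)}

lemma map_restrict_nestM (hμ : ∀ᵐ v ∂μ, v ∈ cube r) (hab : ∀ i, a i < b i)
    (hI : boxI r a b ⊆ cube r)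
    (hunif : μ.restrict (boxI r a b) =
      (μ (boxI r a b) / volume (boxI r a b)) • volume.restrict (boxI r a b))
    {J : Finset (Fin r)}
    (hν : ν.map J.restrict = Measure.pi fun _ : J => volume.restrict (Set.Icc (0 : ℝ) 1)) :
    (nestM r ν μ a b).map J.restrict = μ.map J.restrict := by
  have hπ : Measurable (J.restrict (π := fun _ => ℝ)) := J.measurable_restrict
  have hbox : (ν.map (iota r a b)).map J.restrict =
      ((volume.restrict (cube r)).map (iota r a b)).map J.restrict :=
    map_restrict_map_iota_congr a b (hν.trans (map_restrict_volume_cube J).symm)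
  calc (nestM r ν μ a b).map J.restrict
      = (μ.restrict (cube r \ boxI r a b)).map J.restrict +
          (μ (boxI r a b) • (volume.restrict (cube r)).map (iota r a b)).map J.restrict := by
        rw [nestM, Measure.map_add _ _ hπ, Measure.map_smul, Measure.map_smul, hbox]
    _ = μ.map J.restrict := by
        rw [← restrict_boxI_eq_smul_map_iota hab hunif, ← Measure.map_add _ _ hπ,
          restrict_cube_diff_add_restrict_boxI hμ hI]

lemma nestM_univ [IsProbabilityMeasure ν] (hμ : ∀ᵐ v ∂μ, v ∈ cube r)
    (hI : boxI r a b ⊆ cube r) : nestM r ν μ a b Set.univ = μ Set.univ := by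
  have : IsProbabilityMeasure (ν.map (iota r a b)) :=
    Measure.isProbabilityMeasure_map (by fun_prop)
  conv_rhs => rw [← restrict_cube_diff_add_restrict_boxI hμ hI]
  simp [nestM]

lemma ae_nestM_mem_cube (hν : ∀ᵐ v ∂ν, v ∈ cube r) (hab : ∀ i, a i < b i)
    (hI : boxI r a b ⊆ cube r) : ∀ᵐ v ∂nestM r ν μ a b, v ∈ cube r := by
  have hdiff : ∀ᵐ v ∂μ.restrict (cube r \ boxI r a b), v ∈ cube r :=
    (ae_restrict_mem ((measurableSet_cube r).diff (measurableSet_boxI r a b))).mono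
      fun _ hv => hv.1
  have hiota : ∀ᵐ v ∂ν.map (iota r a b), v ∈ cube r := by
    refine (ae_map_iff (measurable_iota r a b).aemeasurable (measurableSet_cube r)).2 ?_
    filter_upwards [hν] with v hv
    rw [← iota_preimage_boxI hab] at hv
    exact hI hv
  exact ae_add_measure_iff.2 ⟨hdiff, Measure.ae_smul_measure hiota _⟩

lemma isCopulaOfOrder_nestM {k : ℕ} (hμ : IsCopulaOfOrder r k μ) (hν : IsCopulaOfOrder r k ν)
    (hab : ∀ i, a i < b i) (hI : boxI r a b ⊆ cube r)
    (hunif : μ.restrict (boxI r a b) =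
      (μ (boxI r a b) / volume (boxI r a b)) • volume.restrict (boxI r a b)) :
    IsCopulaOfOrder r k (nestM r ν μ a b) := by
  obtain ⟨_, hμcube, hμproj⟩ := hμ
  obtain ⟨_, hνcube, hνproj⟩ := hν
  have hμmem : ∀ᵐ v ∂μ, v ∈ cube r := (mem_ae_iff_prob_eq_one (measurableSet_cube r)).2 hμcube
  have hνmem : ∀ᵐ v ∂ν, v ∈ cube r := (mem_ae_iff_prob_eq_one (measurableSet_cube r)).2 hνcube
  have hprob : IsProbabilityMeasure (nestM r ν μ a b) :=
    ⟨(nestM_univ hμmem hI).trans measure_univ⟩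
  refine ⟨hprob, ?_, fun J hJ => ?_⟩
  · exact (mem_ae_iff_prob_eq_one (measurableSet_cube r)).1 (ae_nestM_mem_cube hνmem hab hI)
  · exact (map_restrict_nestM hμmem hab hI hunif (hνproj J hJ)).trans (hμproj J hJ)

end Nest

theorem stmt_11_general (r : ℕ) (μ ν : Measure (Fin r → ℝ)) (hμ : ∀ᵐ v ∂μ, v ∈ cube r)
    (a b : Fin r → ℝ) (hab : ∀ i, a i < b i) (hI : boxI r a b ⊆ cube r)
    (hunif : μ.restrict (boxI r a b) =
      (μ (boxI r a b) / volume (boxI r a b)) • volume.restrict (boxI r a b)) :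
    (∀ J : Finset (Fin r),
      ν.map J.restrict = Measure.pi (fun _ : J => volume.restrict (Set.Icc (0 : ℝ) 1)) →
      (nestM r ν μ a b).map J.restrict = μ.map J.restrict) ∧
    ∀ k, IsCopulaOfOrder r k μ → IsCopulaOfOrder r k ν → IsCopulaOfOrder r k (nestM r ν μ a b) :=
  ⟨fun _ hν => map_restrict_nestM hμ hab hI hunif hν,
    fun _ hμk hνk => isCopulaOfOrder_nestM hμk hνk hab hI hunif⟩

theorem stmt_11 (r k : ℕ) (hk : 1 ≤ k) (hkr : k ≤ r)
    (μ ν : Measure (Fin r → ℝ))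
    (hμ : IsProbabilityMeasure μ) (hμc : μ (cube r) = 1)
    (hν : IsProbabilityMeasure ν) (hνc : ν (cube r) = 1)
    (a b : Fin r → ℝ) (hab : ∀ i, a i < b i) (hI : boxI r a b ⊆ cube r)
    -- `μ` restricted to `I` is `μ(I)` times the uniform probability measure on `I`
    (hunif : μ.restrict (boxI r a b) =
      (μ (boxI r a b) / volume (boxI r a b)) • volume.restrict (boxI r a b)) :
    (∀ J : Finset (Fin r), J.card = k →
      ν.map (fun v (i : J) => v i.1) =
        Measure.pi (fun _ : J => volume.restrict (Set.Icc (0:ℝ) 1)) →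
      (nestM r ν μ a b).map (fun v (i : J) => v i.1) = μ.map (fun v (i : J) => v i.1)) ∧
    (IsCopulaOfOrder r k μ → IsCopulaOfOrder r k ν →
      IsCopulaOfOrder r k (nestM r ν μ a b)) := by
  have hμmem : ∀ᵐ v ∂μ, v ∈ cube r := (mem_ae_iff_prob_eq_one (measurableSet_cube r)).2 hμc
  obtain ⟨hproj, hcopula⟩ := stmt_11_general r μ ν hμmem a b hab hI hunif
  exact ⟨fun J _ => hproj J, hcopula k⟩
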